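/- Let G be a connected bisplit graph with partition (X,Y,Z), where X, Y, Z are independent sets and Y ∪ Z induces a complete bipartite graph with Y, Z nonempty. Then G is chordal (has no induced cycle of length at least 4) if and only if the following hold (after interchanging Y and Z if necessary so that |Y| = 1, say Y = {y_1}): (1) the biclique Y ∪ Z is a star K_{1,l} with l = |Z| > 0, i.e. |Y| = 1; (2) every vertex x ∈ X of degree at least 2 is adjacent to y_1; and (3) the subgraph of G induced by Z ∪ X is a forest (contains no cycle). -/

import Mathlib

/-!
The argument rests on one general fact (`exists_cycleGraph_embedding_of_not_isAcyclic`): a graph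
with a cycle has an induced cycle, because a cycle of least length has no chord.

If `G` is chordal, then `Y` and `Z` cannot both have two elements, since two vertices of `Y` and
two of `Z` span an induced 4-cycle; say `Y = {y₁}`. A vertex `x ∈ X` not adjacent to `y₁` with two
neighbours `z, z'` (necessarily in `Z`) would give the induced 4-cycle `x z y₁ z'`. The graph
induced on `Z ∪ X` is bipartite, hence has no triangle, so a cycle in it would yield an induced
cycle of length at least 4.

Conversely, an induced cycle of length at least 4 avoiding `y₁` lies in the forest on `Z ∪ X`. If
it passes through `y₁`, the vertex two steps further along it is not adjacent to `y₁`, so it lies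
in `X`; it has two neighbours on the cycle, so it must be adjacent to `y₁`, a contradiction.
-/

open SimpleGraph

/-- Adjacency in a cycle graph in terms of the values in `ℕ`, free of modular subtraction. -/
lemma cycleGraph_adj_iff_val {n : ℕ} (hn : 3 ≤ n) (u v : Fin n) :
    (cycleGraph n).Adj u v ↔ u.val + 1 = v.val ∨ v.val + 1 = u.val ∨
      (u.val = 0 ∧ v.val + 1 = n) ∨ (v.val = 0 ∧ u.val + 1 = n) := by
  rw [cycleGraph_adj']
  have hu := u.isLt
  have hv := v.isLt
  rcases le_total u v with h | h
  · rw [Fin.coe_sub_iff_le.2 h]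
    rcases h.eq_or_lt with rfl | h'
    · rw [Fin.coe_sub_iff_le.2 le_rfl]; omega
    · rw [Fin.coe_sub_iff_lt.2 h']
      rw [Fin.lt_def] at h'
      omega
  · rw [Fin.coe_sub_iff_le.2 h]
    rcases h.eq_or_lt with rfl | h'
    · rw [Fin.coe_sub_iff_le.2 le_rfl]; omega
    · rw [Fin.coe_sub_iff_lt.2 h']
      rw [Fin.lt_def] at h'
      omega

/-- A chord joining the vertices `i` and `j` of a cycle cuts off a shorter cycle, running from `i`
to `j` along the old one. -/
lemma exists_shorter_cycle_of_chord {V : Type*} {H : SimpleGraph V} {n : ℕ} (hn : 3 ≤ n)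
    (f : Copy (cycleGraph n) H) (i j : Fin n) (hij : i.val < j.val)
    (hadj : H.Adj (f i) (f j)) (hnot : ¬ (cycleGraph n).Adj i j) :
    ∃ m, 3 ≤ m ∧ m < n ∧ cycleGraph m ⊑ H := by
  rw [cycleGraph_adj_iff_val hn] at hnot
  have hj := j.isLt
  have hm : 3 ≤ j.val - i.val + 1 := by omega
  refine ⟨j.val - i.val + 1, hm, by omega, ?_⟩
  let e : Fin (j.val - i.val + 1) → Fin n := fun k => ⟨i.val + k.val, by omega⟩
  have he0 : ∀ k, k.val = 0 → e k = i := fun k hk => Fin.ext (by simp [e, hk])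
  have he1 : ∀ k, k.val + 1 = j.val - i.val + 1 → e k = j :=
    fun k hk => Fin.ext (by simp only [e]; omega)
  refine ⟨⟨⟨fun k => f (e k), ?_⟩, ?_⟩⟩
  · intro a b hab
    rw [cycleGraph_adj_iff_val hm] at hab
    rcases hab with h | h | ⟨h, h'⟩ | ⟨h, h'⟩
    · refine f.toHom.map_adj ((cycleGraph_adj_iff_val hn _ _).2 ?_)
      simp only [e]; omega
    · refine f.toHom.map_adj ((cycleGraph_adj_iff_val hn _ _).2 ?_)
      simp only [e]; omega
    · rw [he0 a h, he1 b h']; exact hadj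
    · rw [he0 b h, he1 a h']; exact hadj.symm
  · intro a b hab
    have := f.injective hab
    simp only [e, Fin.mk.injEq] at this
    exact Fin.ext (by omega)

/-- A cycle of least length is induced. -/
lemma exists_cycleGraph_embedding_of_not_isAcyclic {V : Type*} {H : SimpleGraph V}
    (h : ¬ H.IsAcyclic) : ∃ n, 3 ≤ n ∧ Nonempty (cycleGraph n ↪g H) := by
  classical
  have hex : ∃ n, 3 ≤ n ∧ cycleGraph n ⊑ H := by
    rw [isAcyclic_iff_free_cycleGraph] at h
    simpa [SimpleGraph.Free] using h
  obtain ⟨hn, ⟨f⟩⟩ := Nat.find_spec hex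
  have hmin : ∀ m, 3 ≤ m → m < Nat.find hex → ¬ cycleGraph m ⊑ H :=
    fun m h3 hm hc => Nat.find_min hex hm ⟨h3, hc⟩
  refine ⟨_, hn, ⟨⟨⟨f, f.injective⟩, ?_⟩⟩⟩
  intro a b
  refine ⟨fun hab => ?_, fun hab => f.toHom.map_adj hab⟩
  change H.Adj (f a) (f b) at hab
  by_contra hnot
  have hne : a.val ≠ b.val := fun hab' => hab.ne (by rw [Fin.ext hab'])
  rcases hne.lt_or_gt with hlt | hlt
  · obtain ⟨m, h3, hm, hc⟩ := exists_shorter_cycle_of_chord hn f a b hlt hab hnot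
    exact hmin m h3 hm hc
  · obtain ⟨m, h3, hm, hc⟩ :=
      exists_shorter_cycle_of_chord hn f b a hlt hab.symm (fun h' => hnot h'.symm)
    exact hmin m h3 hm hc

lemma nonempty_cycleGraph_four_embedding {V : Type*} {G : SimpleGraph V} {a b c d : V}
    (hab : G.Adj a b) (hbc : G.Adj b c) (hcd : G.Adj c d) (hda : G.Adj d a)
    (hac : ¬ G.Adj a c) (hbd : ¬ G.Adj b d) (hac' : a ≠ c) (hbd' : b ≠ d) :
    Nonempty (cycleGraph 4 ↪g G) := by
  refine ⟨⟨⟨![a, b, c, d], ?_⟩, ?_⟩⟩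
  · intro i j hij
    fin_cases i <;> fin_cases j <;>
      simp_all [hab.ne, hab.ne', hbc.ne, hbc.ne', hcd.ne, hcd.ne', hda.ne, hda.ne', hac'.symm,
        hbd'.symm]
  · intro i j
    have hca : ¬ G.Adj c a := fun h => hac h.symm
    have hdb : ¬ G.Adj d b := fun h => hbd h.symm
    rw [cycleGraph_adj_iff_val (by norm_num)]
    change G.Adj (![a, b, c, d] i) (![a, b, c, d] j) ↔ _
    fin_cases i <;> fin_cases j <;>
      simp [hab, hab.symm, hbc, hbc.symm, hcd, hcd.symm, hda, hda.symm, hac, hbd, hca, hdb]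

/-- A chordal bisplit graph whose biclique is a star centred at `y` satisfies the conditions on
the vertices of `X` and on the graph induced by `Z ∪ X`. -/
lemma conditions_of_chordal {V : Type*} [Finite V] {G : SimpleGraph V} {X Z : Set V} {y : V}
    (hcover : ∀ v, v ∈ X ∨ v = y ∨ v ∈ Z)
    (hX : ∀ a ∈ X, ∀ b ∈ X, ¬ G.Adj a b)
    (hZ : ∀ a ∈ Z, ∀ b ∈ Z, ¬ G.Adj a b)
    (hyX : y ∉ X)
    (hbic : ∀ b ∈ Z, G.Adj y b)
    (hch : ∀ n : ℕ, 4 ≤ n → IsEmpty (cycleGraph n ↪g G)) :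
    (∀ x ∈ X, 2 ≤ (G.neighborSet x).ncard → G.Adj x y) ∧
      (SimpleGraph.induce (Z ∪ X) G).IsAcyclic := by
  constructor
  · intro x hx hdeg
    by_contra hxy
    obtain ⟨a, ha, b, hb, hne⟩ := (Set.one_lt_ncard (Set.toFinite _)).1 hdeg
    rw [mem_neighborSet] at ha hb
    have key : ∀ c, G.Adj x c → c ∈ Z := by
      intro c hc
      rcases hcover c with h | rfl | h
      · exact absurd hc (hX _ hx _ h)
      · exact absurd hc hxy
      · exact h
    obtain ⟨e⟩ := nonempty_cycleGraph_four_embedding ha (hbic a (key a ha)).symm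
      (hbic b (key b hb)) hb.symm hxy (hZ _ (key a ha) _ (key b hb))
      (fun h => hyX (h ▸ hx)) hne
    exact (hch 4 le_rfl).false e
  · by_contra hac
    obtain ⟨n, hn, ⟨e⟩⟩ := exists_cycleGraph_embedding_of_not_isAcyclic hac
    rcases hn.eq_or_lt with rfl | hn
    · have h01 : G.Adj (e 0).1 (e 1).1 := e.map_adj_iff.2 (by decide)
      have h02 : G.Adj (e 0).1 (e 2).1 := e.map_adj_iff.2 (by decide)
      have h12 : G.Adj (e 1).1 (e 2).1 := e.map_adj_iff.2 (by decide)
      rcases (e 0).2 with h0 | h0 <;> rcases (e 1).2 with h1 | h1 <;>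
        rcases (e 2).2 with h2 | h2 <;>
        first
        | exact hZ _ h0 _ h1 h01
        | exact hZ _ h0 _ h2 h02
        | exact hZ _ h1 _ h2 h12
        | exact hX _ h0 _ h1 h01
        | exact hX _ h0 _ h2 h02
        | exact hX _ h1 _ h2 h12
    · exact (hch n hn).false (e.trans (Embedding.induce _))

open scoped Fin.CommRing in
/-- The converse: the two conditions relative to a star centred at `y` make the graph chordal. -/
lemma chordal_of_conditions {V : Type*} [Finite V] {G : SimpleGraph V} {X Z : Set V} {y : V}
    (hcover : ∀ v, v ∈ X ∨ v = y ∨ v ∈ Z)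
    (hbic : ∀ b ∈ Z, G.Adj y b)
    (hdeg : ∀ x ∈ X, 2 ≤ (G.neighborSet x).ncard → G.Adj x y)
    (hac : (SimpleGraph.induce (Z ∪ X) G).IsAcyclic) (n : ℕ) (hn : 4 ≤ n) :
    IsEmpty (cycleGraph n ↪g G) := by
  refine ⟨fun f => ?_⟩
  by_cases hy : ∃ i, f i = y
  · obtain ⟨i, rfl⟩ := hy
    obtain ⟨k, rfl⟩ := Nat.exists_eq_add_of_le' hn
    have h1 : (1 : Fin (k + 4)) ≠ 2 := by
      simp [Fin.ext_iff, Nat.mod_eq_of_lt (show 2 < k + 4 by omega)]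
    have h2 : (2 : Fin (k + 4)) ≠ 0 := by
      simp [Fin.ext_iff, Nat.mod_eq_of_lt (show 2 < k + 4 by omega)]
    have h3 : (3 : Fin (k + 4)) ≠ 0 := by
      simp [Fin.ext_iff, Nat.mod_eq_of_lt (show 3 < k + 4 by omega)]
    have hnadj : ¬ G.Adj (f i) (f (i + 2)) := by
      rw [f.map_adj_iff, cycleGraph_adj]
      rintro (h | h)
      · apply h3
        linear_combination -h
      · apply h1
        linear_combination -h
    have hxX : f (i + 2) ∈ X := by
      rcases hcover (f (i + 2)) with h | h | h
      · exact h
      · exact absurd (f.injective h) (by simpa using h2)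
      · exact absurd (hbic _ h) hnadj
    refine hnadj (hdeg _ hxX ?_).symm
    refine (Set.one_lt_ncard (Set.toFinite _)).2 ⟨f (i + 1), ?_, f (i + 3), ?_, ?_⟩
    · rw [mem_neighborSet, f.map_adj_iff, cycleGraph_adj]
      left; ring
    · rw [mem_neighborSet, f.map_adj_iff, cycleGraph_adj]
      right; ring
    · intro h
      apply h2
      linear_combination -(f.injective h)
  · have hmem : ∀ i, f i ∈ Z ∪ X := by
      intro i
      rcases hcover (f i) with h | h | h
      · exact Or.inr h
      · exact absurd ⟨i, h⟩ hy
      · exact Or.inl h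
    refine isAcyclic_iff_free_cycleGraph.1 hac n (by omega) ⟨⟨⟨fun i => ⟨f i, hmem i⟩, ?_⟩, ?_⟩⟩
    · intro a b hab
      exact f.map_adj_iff.2 hab
    · intro a b hab
      exact f.injective (congrArg Subtype.val hab)


theorem chordal_bisplit_characterization {V : Type*} [Fintype V]
    (G : SimpleGraph V) (X Y Z : Set V)
    (hpart : X ∪ Y ∪ Z = Set.univ)
    (hXY : Disjoint X Y) (hXZ : Disjoint X Z) (hYZ : Disjoint Y Z)
    (hX : ∀ a ∈ X, ∀ b ∈ X, ¬ G.Adj a b)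
    (hY : ∀ a ∈ Y, ∀ b ∈ Y, ¬ G.Adj a b)
    (hZ : ∀ a ∈ Z, ∀ b ∈ Z, ¬ G.Adj a b)
    (hbic : ∀ a ∈ Y, ∀ b ∈ Z, G.Adj a b)
    (hYne : Y.Nonempty) (hZne : Z.Nonempty)
    (hconn : G.Connected) :
    -- `G` is chordal (no induced cycle of length at least 4) iff, after possibly
    -- interchanging `Y` and `Z`, the three structural conditions hold
    (∀ n : ℕ, 4 ≤ n → IsEmpty (SimpleGraph.cycleGraph n ↪g G)) ↔
      ∃ Y' Z' : Set V, ((Y' = Y ∧ Z' = Z) ∨ (Y' = Z ∧ Z' = Y)) ∧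
        ∃ y₁ : V, Y' = {y₁} ∧ Z'.Nonempty ∧
          (∀ x ∈ X, 2 ≤ (G.neighborSet x).ncard → G.Adj x y₁) ∧
          (SimpleGraph.induce (Z' ∪ X) G).IsAcyclic := by
  
  have hcov : ∀ v, v ∈ X ∨ v ∈ Y ∨ v ∈ Z := by
    intro v
    have : v ∈ X ∪ Y ∪ Z := hpart ▸ Set.mem_univ v
    simpa [or_assoc] using this
  constructor
  · intro hch
    by_cases hYs : Y.Subsingleton
    · obtain ⟨y, rfl⟩ := hYs.eq_empty_or_singleton.resolve_left hYne.ne_empty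
      refine ⟨{y}, Z, Or.inl ⟨rfl, rfl⟩, y, rfl, hZne, ?_⟩
      exact conditions_of_chordal hcov hX hZ (Set.disjoint_singleton_right.1 hXY) (hbic y rfl) hch
    · by_cases hZs : Z.Subsingleton
      · obtain ⟨z, rfl⟩ := hZs.eq_empty_or_singleton.resolve_left hZne.ne_empty
        refine ⟨{z}, Y, Or.inr ⟨rfl, rfl⟩, z, rfl, hYne, ?_⟩
        exact conditions_of_chordal (fun v => (hcov v).imp_right Or.symm) hX hY
          (Set.disjoint_singleton_right.1 hXZ) (fun b hb => (hbic b hb z rfl).symm) hch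
      · obtain ⟨a, ha, c, hc, hac⟩ := Set.not_subsingleton_iff.1 hYs
        obtain ⟨b, hb, d, hd, hbd⟩ := Set.not_subsingleton_iff.1 hZs
        obtain ⟨e⟩ := nonempty_cycleGraph_four_embedding (hbic a ha b hb) (hbic c hc b hb).symm
          (hbic c hc d hd) (hbic a ha d hd).symm (hY _ ha _ hc) (hZ _ hb _ hd) hac hbd
        exact ((hch 4 le_rfl).false e).elim
  · rintro ⟨Y', Z', (⟨rfl, rfl⟩ | ⟨rfl, rfl⟩), y, rfl, -, hdeg, hac⟩
    · exact chordal_of_conditions hcov (hbic y rfl) hdeg hac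
    · exact chordal_of_conditions (fun v => (hcov v).imp_right Or.symm)
        (fun b hb => (hbic b hb y rfl).symm) hdeg hac
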